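/- (Weighted face count over a dual face.) Let n = dim V. For every face A∨ of the dual arrangement H∨ and every face B of H: Σ_{B∨} (−1)^{n − dim B∨} = 1 if B ⊆ V(A∨) and = 0 otherwise, where the sum ranges over the finitely many faces B∨ of H∨ such that A∨ ≤ B∨ and B ⊆ U(B∨). -/

import Mathlib

/-! Basic notions for a (central, essential) arrangement of hyperplanes `H`
in a finite-dimensional real vector space, its faces, flats, the dual
arrangement and its faces, and the big/small dual cones. -/

/-- Two points `x`, `y` lie in the same face of the hyperplane arrangement `H`:
for every hyperplane `W ∈ H` and every linear functional `f` with kernel `W`,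
either `f x · f y > 0` or `f x = f y = 0`. -/
def SameFace {V : Type*} [AddCommGroup V] [Module ℝ V]
    (H : Finset (Submodule ℝ V)) (x y : V) : Prop :=
  ∀ W ∈ H, ∀ f : V →ₗ[ℝ] ℝ, LinearMap.ker f = W →
    (0 < f x * f y ∨ (f x = 0 ∧ f y = 0))

/-- A face of the arrangement `H`: an equivalence class of the relation `SameFace`. -/
def IsFace {V : Type*} [AddCommGroup V] [Module ℝ V]
    (H : Finset (Submodule ℝ V)) (A : Set V) : Prop :=
  ∃ x : V, A = {y | SameFace H x y}

/-- A chamber is an open face. -/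
def IsChamber {V : Type*} [AddCommGroup V] [Module ℝ V] [TopologicalSpace V]
    (H : Finset (Submodule ℝ V)) (A : Set V) : Prop :=
  IsFace H A ∧ IsOpen A

/-- A flat of `H`: an intersection of a subfamily of the hyperplanes
(the empty subfamily gives all of `V`). -/
def IsFlat {V : Type*} [AddCommGroup V] [Module ℝ V]
    (H : Finset (Submodule ℝ V)) (L : Submodule ℝ V) : Prop :=
  ∃ J : Finset (Submodule ℝ V), J ⊆ H ∧ L = J.inf id

/-- Two (continuous) linear functionals `f`, `g` lie in the same face of the dual
arrangement `H∨`: for every 1-dimensional flat `l` of `H` and every `x ∈ l`,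
either `f x · g x > 0` or `f x = g x = 0`. -/
def DualSameFace {V : Type*} [NormedAddCommGroup V] [NormedSpace ℝ V]
    (H : Finset (Submodule ℝ V)) (f g : V →L[ℝ] ℝ) : Prop :=
  ∀ l : Submodule ℝ V, IsFlat H l → Module.finrank ℝ l = 1 →
    ∀ x ∈ l, (0 < f x * g x ∨ (f x = 0 ∧ g x = 0))

/-- A face of the dual arrangement `H∨` in the dual space. -/
def IsDualFace {V : Type*} [NormedAddCommGroup V] [NormedSpace ℝ V]
    (H : Finset (Submodule ℝ V)) (A : Set (V →L[ℝ] ℝ)) : Prop :=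
  ∃ f : V →L[ℝ] ℝ, A = {g | DualSameFace H f g}

/-- A chamber of the dual arrangement: an open dual face. -/
def IsDualChamber {V : Type*} [NormedAddCommGroup V] [NormedSpace ℝ V]
    (H : Finset (Submodule ℝ V)) (A : Set (V →L[ℝ] ℝ)) : Prop :=
  IsDualFace H A ∧ IsOpen A

/-- The big dual cone `U(A∨)` of a dual face `A∨`. -/
def bigCone {V : Type*} [NormedAddCommGroup V] [NormedSpace ℝ V]
    (A : Set (V →L[ℝ] ℝ)) : Set V :=
  {x | ∀ f ∈ A, 0 ≤ f x}

/-- The small dual cone `V(A∨)` of a dual face `A∨`: the intersection of the big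
dual cones of all dual chambers `B∨` with `A∨ ≤ B∨`. -/
def smallCone {V : Type*} [NormedAddCommGroup V] [NormedSpace ℝ V]
    (H : Finset (Submodule ℝ V)) (A : Set (V →L[ℝ] ℝ)) : Set V :=
  ⋂ B ∈ {B : Set (V →L[ℝ] ℝ) | IsDualChamber H B ∧ A ⊆ closure B}, bigCone B

section Euler
open scoped Classical
variable {E : Type*} [NormedAddCommGroup E] [NormedSpace ℝ E] [FiniteDimensional ℝ E]

/-- Relatively open convex subset of a linear subspace. -/
def RelOp (S : Set E) : Prop :=
  ∃ (W : Submodule ℝ E) (P : Set E), IsOpen P ∧ Convex ℝ P ∧ S = (W : Set E) ∩ P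

noncomputable def eul (S : Set E) : ℤ :=
  if S.Nonempty then (-1) ^ (Module.finrank ℝ (Submodule.span ℝ S)) else 0

lemma exists_small {P : Set E} (hP : IsOpen P) {x : E} (hx : x ∈ P) (w : E) :
    ∃ t : ℝ, 0 < t ∧ x + t • w ∈ P := by
  have hc : Continuous (fun t : ℝ => x + t • w) := by fun_prop
  have h0 : (fun t : ℝ => x + t • w) ⁻¹' P ∈ nhds (0 : ℝ) :=
    (hP.preimage hc).mem_nhds (by simpa using hx)
  obtain ⟨ε, hε, hb⟩ := Metric.mem_nhds_iff.1 h0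
  refine ⟨ε / 2, by positivity, ?_⟩
  exact hb (by simp [abs_of_pos hε, hε])

lemma span_relop (W : Submodule ℝ E) {P : Set E} (hP : IsOpen P)
    (hne : ((W : Set E) ∩ P).Nonempty) : Submodule.span ℝ ((W : Set E) ∩ P) = W := by
  apply le_antisymm
  · exact Submodule.span_le.2 Set.inter_subset_left
  · intro w hw
    obtain ⟨x, hxW, hxP⟩ := hne
    obtain ⟨t, ht, h⟩ := exists_small hP hxP w
    have h1 : x + t • w ∈ Submodule.span ℝ ((W : Set E) ∩ P) :=
      Submodule.subset_span ⟨W.add_mem hxW (W.smul_mem t hw), h⟩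
    have h2 : x ∈ Submodule.span ℝ ((W : Set E) ∩ P) := Submodule.subset_span ⟨hxW, hxP⟩
    have h3 : t • w ∈ Submodule.span ℝ ((W : Set E) ∩ P) := by
      simpa using Submodule.sub_mem _ h1 h2
    exact (Submodule.smul_mem_iff _ ht.ne').1 h3

lemma eul_relop (W : Submodule ℝ E) {P : Set E} (hP : IsOpen P)
    (hne : ((W : Set E) ∩ P).Nonempty) :
    eul ((W : Set E) ∩ P) = (-1) ^ Module.finrank ℝ W := by
  rw [eul, if_pos hne, span_relop W hP hne]

lemma eul_empty {S : Set E} (h : ¬ S.Nonempty) : eul S = 0 := by rw [eul, if_neg h]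

lemma relOp_sign {S : Set E} (hS : RelOp S) (φ : E →L[ℝ] ℝ) (s : SignType) :
    RelOp (S ∩ {f | SignType.sign (φ f) = s}) := by
  obtain ⟨W, P, hP, hc, rfl⟩ := hS
  cases s
  · refine ⟨W ⊓ LinearMap.ker (φ : E →ₗ[ℝ] ℝ), P, hP, hc, ?_⟩
    ext x; simp [sign_eq_zero_iff]; tauto
  · refine ⟨W, P ∩ {f | φ f < 0}, hP.inter (isOpen_lt φ.continuous continuous_const),
      hc.inter (convex_halfSpace_lt (φ : E →ₗ[ℝ] ℝ).isLinear 0), ?_⟩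
    ext x; simp [sign_eq_neg_one_iff]; tauto
  · refine ⟨W, P ∩ {f | 0 < φ f}, hP.inter (isOpen_lt continuous_const φ.continuous),
      hc.inter (convex_halfSpace_gt (φ : E →ₗ[ℝ] ℝ).isLinear 0), ?_⟩
    ext x; simp [sign_eq_one_iff]; tauto

lemma eul_step {S : Set E} (hS : RelOp S) (φ : E →L[ℝ] ℝ) :
    ∑ s : SignType, eul (S ∩ {f | SignType.sign (φ f) = s}) = eul S := by
  obtain ⟨W, P, hP, hc, rfl⟩ := hS
  have hsum : ∀ F : SignType → ℤ, ∑ s, F s = F 0 + F (-1) + F 1 := by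
    intro F
    have : (Finset.univ : Finset SignType) = {0, -1, 1} := rfl
    rw [this]; simp; ring
  rw [hsum]
  have e0 : (W : Set E) ∩ P ∩ {f | SignType.sign (φ f) = 0}
      = ((W ⊓ LinearMap.ker (φ : E →ₗ[ℝ] ℝ) : Submodule ℝ E) : Set E) ∩ P := by
    ext x; simp [sign_eq_zero_iff]; tauto
  have e1 : (W : Set E) ∩ P ∩ {f | SignType.sign (φ f) = -1}
      = (W : Set E) ∩ (P ∩ {f | φ f < 0}) := by
    ext x; simp [sign_eq_neg_one_iff]; tauto
  have e2 : (W : Set E) ∩ P ∩ {f | SignType.sign (φ f) = 1}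
      = (W : Set E) ∩ (P ∩ {f | 0 < φ f}) := by
    ext x; simp [sign_eq_one_iff]; tauto
  rw [e0, e1, e2]
  have o1 : IsOpen (P ∩ {f | φ f < 0}) := hP.inter (isOpen_lt φ.continuous continuous_const)
  have o2 : IsOpen (P ∩ {f | 0 < φ f}) := hP.inter (isOpen_lt continuous_const φ.continuous)
  by_cases hne : ((W : Set E) ∩ P).Nonempty
  swap
  · rw [eul_empty hne, eul_empty, eul_empty, eul_empty]; · rfl
    · exact fun ⟨x, h1, h2⟩ => hne ⟨x, h1, h2.1⟩
    · exact fun ⟨x, h1, h2⟩ => hne ⟨x, h1, h2.1⟩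
    · exact fun ⟨x, h1, h2⟩ => hne ⟨x, h1.1, h2⟩
  by_cases hW : ∀ w ∈ W, φ w = 0
  · have : W ⊓ LinearMap.ker (φ : E →ₗ[ℝ] ℝ) = W := by
      apply inf_eq_left.2; intro w hw; simpa using hW w hw
    rw [this, eul_empty (S := (W : Set E) ∩ (P ∩ {f | φ f < 0})),
      eul_empty (S := (W : Set E) ∩ (P ∩ {f | 0 < φ f}))]
    · ring
    · rintro ⟨x, h1, h2⟩; have := hW x h1; have := h2.2; simp_all
    · rintro ⟨x, h1, h2⟩; have := hW x h1; have := h2.2; simp_all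
  push Not at hW
  obtain ⟨w, hw, hφw⟩ := hW
  have hdim : Module.finrank ℝ ↥(W ⊓ LinearMap.ker (φ : E →ₗ[ℝ] ℝ)) + 1 = Module.finrank ℝ W := by
    have hne0 : ((φ : E →ₗ[ℝ] ℝ).comp W.subtype : Module.Dual ℝ W) ≠ 0 := by
      intro h
      apply hφw
      have := LinearMap.congr_fun h ⟨w, hw⟩
      simpa using this
    rw [← Module.Dual.finrank_ker_add_one_of_ne_zero hne0, LinearMap.ker_comp]
    congr 1
    rw [← Submodule.map_comap_subtype]
    exact Submodule.finrank_map_subtype_eq _ _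
  rw [eul_relop W hP hne]
  by_cases hz : (((W ⊓ LinearMap.ker (φ : E →ₗ[ℝ] ℝ) : Submodule ℝ E) : Set E) ∩ P).Nonempty
  · have hz' := hz
    obtain ⟨x, ⟨hxW, hx0⟩, hxP⟩ := hz
    have hx0' : φ x = 0 := by simpa using hx0
    obtain ⟨t, ht, h⟩ := exists_small hP hxP ((φ w) • w)
    obtain ⟨t', ht', h'⟩ := exists_small hP hxP ((-φ w) • w)
    have hsq : 0 < φ w * φ w := mul_self_pos.2 hφw
    rw [eul_relop _ hP hz', eul_relop _ o1, eul_relop _ o2, ← hdim]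
    · rw [pow_succ]; ring
    · refine ⟨_, W.add_mem hxW (W.smul_mem t (W.smul_mem _ hw)), h, ?_⟩
      simp [hx0']; positivity
    · refine ⟨_, W.add_mem hxW (W.smul_mem t' (W.smul_mem _ hw)), h', ?_⟩
      simp [hx0']; positivity
  · rw [eul_empty hz]
    have key : ∀ x ∈ (W : Set E) ∩ P, ∀ y ∈ (W : Set E) ∩ P, 0 < φ x → φ y < 0 → False := by
      rintro x ⟨hxW, hxP⟩ y ⟨hyW, hyP⟩ h1 h2
      apply hz
      have hd : 0 < φ x - φ y := by linarith
      refine ⟨(-φ y / (φ x - φ y)) • x + (φ x / (φ x - φ y)) • y, ⟨?_, ?_⟩, ?_⟩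
      · exact W.add_mem (W.smul_mem _ hxW) (W.smul_mem _ hyW)
      · simp; field_simp; ring
      · apply hc hxP hyP
        · apply div_nonneg <;> linarith
        · apply div_nonneg <;> linarith
        · field_simp; ring
    obtain ⟨x, hxW, hxP⟩ := hne
    have hx0 : φ x ≠ 0 := fun h => hz ⟨x, ⟨hxW, by simpa using h⟩, hxP⟩
    rcases lt_or_gt_of_ne hx0 with h | h
    · rw [eul_relop W o1 ⟨x, hxW, hxP, h⟩, eul_empty]; · ring
      rintro ⟨y, hyW, hyP, hy⟩
      exact key y ⟨hyW, hyP⟩ x ⟨hxW, hxP⟩ hy h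
    · rw [eul_relop W o2 ⟨x, hxW, hxP, h⟩, eul_empty]; · ring
      rintro ⟨y, hyW, hyP, hy⟩
      exact key x ⟨hxW, hxP⟩ y ⟨hyW, hyP⟩ h hy

lemma eul_sum (m : ℕ) (φ : Fin m → (E →L[ℝ] ℝ)) {S : Set E} (hS : RelOp S) :
    ∑ σ : Fin m → SignType, eul (S ∩ {f | ∀ i, SignType.sign (φ i f) = σ i}) = eul S := by
  induction m generalizing S with
  | zero => simp
  | succ m ih =>
    rw [← (Fin.consEquiv (fun _ => SignType)).sum_comp, Fintype.sum_prod_type, ← eul_step hS (φ 0)]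
    refine Finset.sum_congr rfl fun s _ => ?_
    rw [← ih (fun i => φ i.succ) (relOp_sign hS (φ 0) s)]
    refine Finset.sum_congr rfl fun σ _ => ?_
    congr 1
    ext f
    simp [Fin.consEquiv, Fin.forall_fin_succ]; tauto

lemma eul_open {P : Set E} (hP : IsOpen P) (hne : P.Nonempty) :
    eul P = (-1) ^ Module.finrank ℝ E := by
  have h := eul_relop (⊤ : Submodule ℝ E) hP (by simpa using hne)
  simpa using h

end Euler
section Comb
open scoped Classical
variable {V : Type*} [NormedAddCommGroup V] [NormedSpace ℝ V] [FiniteDimensional ℝ V]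

/-- Dual face with sign vector `σ`. -/
def sgFace {m : ℕ} (v : Fin m → V) (σ : Fin m → SignType) : Set (V →L[ℝ] ℝ) :=
  {f | ∀ i, SignType.sign (f (v i)) = σ i}

noncomputable def evalAt (x : V) : (V →L[ℝ] ℝ) →L[ℝ] ℝ := ContinuousLinearMap.apply ℝ ℝ x

lemma evalAt_apply (x : V) (f : V →L[ℝ] ℝ) : evalAt x f = f x := rfl

/-- star of the dual face of `a`. -/
def star' {m : ℕ} (v : Fin m → V) (a : V →L[ℝ] ℝ) : Set (V →L[ℝ] ℝ) :=
  {f | ∀ i, 0 < a (v i) * a (v i) → 0 < a (v i) * f (v i)}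

lemma star'_open {m : ℕ} (v : Fin m → V) (a : V →L[ℝ] ℝ) : IsOpen (star' v a) := by
  have : star' v a = ⋂ i, {f | 0 < a (v i) * a (v i) → 0 < a (v i) * f (v i)} := by
    ext f; simp [star']
  rw [this]
  refine isOpen_iInter_of_finite fun i => ?_
  by_cases h : 0 < a (v i) * a (v i)
  · simp only [h, true_imp_iff]
    exact isOpen_lt continuous_const (continuous_const.mul (evalAt (v i)).continuous)
  · simp [h]

lemma star'_convex {m : ℕ} (v : Fin m → V) (a : V →L[ℝ] ℝ) : Convex ℝ (star' v a) := by
  have : star' v a = ⋂ i, {f | 0 < a (v i) * a (v i) → 0 < a (v i) * f (v i)} := by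
    ext f; simp [star']
  rw [this]
  refine convex_iInter fun i => ?_
  by_cases h : 0 < a (v i) * a (v i)
  · simp only [h, true_imp_iff]
    exact convex_halfSpace_gt (a (v i) • (evalAt (v i)) : (V →L[ℝ] ℝ) →ₗ[ℝ] ℝ).isLinear 0
  · simpa [h] using convex_univ

lemma mem_star'_iff {m : ℕ} (v : Fin m → V) (a f : V →L[ℝ] ℝ) :
    f ∈ star' v a ↔ ∀ i, a (v i) ≠ 0 → SignType.sign (f (v i)) = SignType.sign (a (v i)) := by
  unfold star'
  refine forall_congr' fun i => ?_
  rw [mul_self_pos]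
  refine imp_congr_right fun h => ?_
  rcases lt_or_gt_of_ne h with h | h
  · rw [sign_neg h, sign_eq_neg_one_iff]
    constructor
    · intro h'; by_contra hh; push Not at hh; nlinarith
    · intro h'; nlinarith
  · rw [sign_pos h, sign_eq_one_iff]
    constructor
    · intro h'; by_contra hh; push Not at hh; nlinarith
    · intro h'; nlinarith

lemma self_mem_star' {m : ℕ} (v : Fin m → V) (a : V →L[ℝ] ℝ) : a ∈ star' v a := by
  rw [mem_star'_iff]; intros; rfl

lemma negOpen {m : ℕ} (v : Fin m → V) (S : Finset (Fin m)) :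
    IsOpen {f : V →L[ℝ] ℝ | ∀ j ∈ S, f (v j) < 0} := by
  have : {f : V →L[ℝ] ℝ | ∀ j ∈ S, f (v j) < 0} = ⋂ j ∈ S, {f | f (v j) < 0} := by
    ext f; simp
  rw [this]
  exact isOpen_biInter_finset fun j _ => isOpen_lt (evalAt (v j)).continuous continuous_const

lemma negConvex {m : ℕ} (v : Fin m → V) (S : Finset (Fin m)) :
    Convex ℝ {f : V →L[ℝ] ℝ | ∀ j ∈ S, f (v j) < 0} := by
  have : {f : V →L[ℝ] ℝ | ∀ j ∈ S, f (v j) < 0} = ⋂ j ∈ S, {f | f (v j) < 0} := by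
    ext f; simp
  rw [this]
  exact convex_iInter₂ fun j _ =>
    convex_halfSpace_lt ((evalAt (v j)) : (V →L[ℝ] ℝ) →ₗ[ℝ] ℝ).isLinear 0

lemma finrank_cdual : Module.finrank ℝ (V →L[ℝ] ℝ) = Module.finrank ℝ V := by
  rw [← Subspace.dual_finrank_eq (K := ℝ) (V := V)]
  exact (LinearMap.toContinuousLinearMap (𝕜 := ℝ) (E := V) (F' := ℝ)).finrank_eq.symm

lemma comb_sum {m : ℕ} (v : Fin m → V) (J : Finset (Fin m)) (a e : V →L[ℝ] ℝ)
    (ha : ∀ j ∈ J, 0 ≤ a (v j)) (he : ∀ j ∈ J, 0 < e (v j)) :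
    ∑ σ : Fin m → SignType,
      (if (∀ i, a (v i) ≠ 0 → σ i = SignType.sign (a (v i))) ∧ ∀ j ∈ J, σ j ≠ -1 then
        eul (sgFace v σ) else 0)
      = (-1) ^ Module.finrank ℝ V * (if ∀ j ∈ J, 0 < a (v j) then 1 else 0) := by
  set J0 := J.filter (fun j => a (v j) = 0) with hJ0
  have h1 : ∀ σ : Fin m → SignType,
      (if (∀ i, a (v i) ≠ 0 → σ i = SignType.sign (a (v i))) ∧ ∀ j ∈ J, σ j ≠ -1 then
        eul (sgFace v σ) else 0) =
      ∑ S ∈ J0.powerset, (-1) ^ S.card *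
        eul ((star' v a ∩ {f : V →L[ℝ] ℝ | ∀ j ∈ S, f (v j) < 0}) ∩
          {f | ∀ i, SignType.sign (evalAt (v i) f) = σ i}) := by
    intro σ
    by_cases hσ : ∀ i, a (v i) ≠ 0 → σ i = SignType.sign (a (v i))
    swap
    · rw [if_neg (fun h => hσ h.1)]
      symm
      apply Finset.sum_eq_zero
      intro S _
      rw [eul_empty, mul_zero]
      rintro ⟨f, ⟨hf, -⟩, hf2⟩
      apply hσ
      intro i hi
      rw [mem_star'_iff] at hf
      rw [← hf i hi]; exact (hf2 i).symm
    set N := J0.filter (fun j => σ j = -1) with hN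
    have h2 : ∀ S ∈ J0.powerset, (-1 : ℤ) ^ S.card *
        eul ((star' v a ∩ {f : V →L[ℝ] ℝ | ∀ j ∈ S, f (v j) < 0}) ∩
          {f | ∀ i, SignType.sign (evalAt (v i) f) = σ i}) =
        if S ⊆ N then (-1) ^ S.card * eul (sgFace v σ) else 0 := by
      intro S hS
      split_ifs with hSN
      · congr 2
        ext f
        constructor
        · exact fun h => h.2
        · intro h
          refine ⟨⟨?_, ?_⟩, h⟩
          · rw [mem_star'_iff]; intro i hi; rw [← hσ i hi]; exact h i
          · intro j hj
            have := (Finset.mem_filter.1 (hSN hj)).2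
            rw [← sign_eq_neg_one_iff, ← this]; exact h j
      · rw [eul_empty, mul_zero]
        rintro ⟨f, ⟨-, hf⟩, hf2⟩
        apply hSN
        intro j hj
        refine Finset.mem_filter.2 ⟨Finset.mem_powerset.1 hS hj, ?_⟩
        rw [← hf2 j]; exact sign_neg (hf j hj)
    rw [Finset.sum_congr rfl h2, ← Finset.sum_filter]
    have h3 : J0.powerset.filter (fun S => S ⊆ N) = N.powerset := by
      ext S
      simp only [Finset.mem_filter, Finset.mem_powerset]
      exact ⟨fun h => h.2, fun h => ⟨h.trans (Finset.filter_subset _ _), h⟩⟩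
    rw [h3, ← Finset.sum_mul, Finset.sum_powerset_neg_one_pow_card]
    have h4 : ((∀ i, a (v i) ≠ 0 → σ i = SignType.sign (a (v i))) ∧ ∀ j ∈ J, σ j ≠ -1) ↔
        N = ∅ := by
      rw [hN, Finset.filter_eq_empty_iff]
      constructor
      · intro h j hj
        exact h.2 j (Finset.mem_filter.1 hj).1
      · intro h
        refine ⟨hσ, fun j hj hs => ?_⟩
        by_cases h0 : a (v j) = 0
        · exact h (Finset.mem_filter.2 ⟨hj, h0⟩) hs
        · rw [hσ j h0, sign_eq_neg_one_iff] at hs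
          exact absurd (ha j hj) (not_le.2 hs)
    by_cases h5 : N = ∅
    · rw [if_pos (h4.2 h5), if_pos h5, one_mul]
    · rw [if_neg (fun h => h5 (h4.1 h)), if_neg h5, zero_mul]
  rw [Finset.sum_congr rfl (fun σ _ => h1 σ), Finset.sum_comm]
  have h6 : ∀ S ∈ J0.powerset, ∑ σ : Fin m → SignType, (-1 : ℤ) ^ S.card *
        eul ((star' v a ∩ {f : V →L[ℝ] ℝ | ∀ j ∈ S, f (v j) < 0}) ∩
          {f | ∀ i, SignType.sign (evalAt (v i) f) = σ i}) =
        (-1) ^ S.card * (-1) ^ Module.finrank ℝ V := by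
    intro S hS
    have ho := (star'_open v a).inter (negOpen v S)
    have hc := (star'_convex v a).inter (negConvex v S)
    rw [← Finset.mul_sum, eul_sum m (fun i => evalAt (v i)) ⟨⊤, _, ho, hc, by simp⟩,
      eul_open ho, finrank_cdual]
    obtain ⟨t, ht, h⟩ := exists_small (star'_open v a) (self_mem_star' v a) (-e)
    refine ⟨_, h, ?_⟩
    intro j hj
    have hj' := Finset.mem_filter.1 (Finset.mem_powerset.1 hS hj)
    have := mul_pos ht (he j hj'.1)
    simp [hj'.2, this]
  rw [Finset.sum_congr rfl h6, ← Finset.sum_mul, Finset.sum_powerset_neg_one_pow_card, mul_comm]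
  congr 1
  have h7 : J0 = ∅ ↔ ∀ j ∈ J, 0 < a (v j) := by
    rw [hJ0, Finset.filter_eq_empty_iff]
    refine forall₂_congr fun j hj => ?_
    constructor
    · intro h; exact lt_of_le_of_ne (ha j hj) (Ne.symm h)
    · intro h; exact h.ne'
  simp only [h7]

end Comb
section Geo
open scoped Classical
variable {V : Type*} [AddCommGroup V] [Module ℝ V] [FiniteDimensional ℝ V]

/-- closed face of `x0` -/
def ClF (H : Finset (Submodule ℝ V)) (φ : Submodule ℝ V → V →ₗ[ℝ] ℝ) (x0 z : V) : Prop :=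
  ∀ W ∈ H, 0 ≤ φ W x0 * φ W z ∧ (φ W x0 = 0 → φ W z = 0)

lemma gen_aux (H : Finset (Submodule ℝ V)) (φ : Submodule ℝ V → V →ₗ[ℝ] ℝ)
    (hφ : ∀ W ∈ H, LinearMap.ker (φ W) = W)
    (hess : ∀ y, (∀ W ∈ H, φ W y = 0) → y = 0) (x0 : V) (g : V →ₗ[ℝ] ℝ) :
    ∀ k : ℕ, ∀ x, (H.filter (fun W => φ W x ≠ 0)).card = k → ClF H φ x0 x → g x < 0 →
      ∃ r, ClF H φ x0 r ∧ g r < 0 ∧ ∃ l, IsFlat H l ∧ Module.finrank ℝ l = 1 ∧ r ∈ l := by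
  intro k
  induction k using Nat.strong_induction_on with
  | _ k ih =>
  intro x hk hx hg
  set J := H.filter (fun W => φ W x = 0) with hJ
  set L : Submodule ℝ V := J.inf id with hL
  have hmemL : ∀ y, y ∈ L ↔ ∀ W ∈ J, φ W y = 0 := by
    intro y
    rw [hL, Submodule.mem_finsetInf]
    refine forall₂_congr fun W hW => ?_
    rw [id, ← LinearMap.mem_ker, hφ W (Finset.mem_filter.1 hW).1]
  have hxL : x ∈ L := (hmemL x).2 fun W hW => (Finset.mem_filter.1 hW).2
  by_cases h1 : Module.finrank ℝ L = 1
  · exact ⟨x, hx, hg, L, ⟨J, Finset.filter_subset _ _, rfl⟩, h1, hxL⟩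
  have hpos : Module.finrank ℝ L ≠ 0 := by
    intro h0
    rw [Submodule.finrank_eq_zero] at h0
    rw [h0, Submodule.mem_bot] at hxL
    simp [hxL] at hg
  have hker : LinearMap.ker (g.comp L.subtype) ≠ ⊥ := by
    apply LinearMap.ker_ne_bot_of_finrank_lt
    rw [Module.finrank_self]; omega
  obtain ⟨y', hy', hy0'⟩ := Submodule.exists_mem_ne_zero_of_ne_bot hker
  have hex : ∃ y ∈ L, g y = 0 ∧ ∃ W ∈ H, φ W x * φ W y < 0 := by
    have hyn : (y' : V) ≠ 0 := by simpa using hy0'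
    have : ∃ W ∈ H, φ W (y' : V) ≠ 0 := by
      by_contra h; push Not at h; exact hyn (hess _ h)
    obtain ⟨W, hW, hWy⟩ := this
    have hWx : φ W x ≠ 0 := fun h =>
      hWy ((hmemL _).1 y'.2 W (Finset.mem_filter.2 ⟨hW, h⟩))
    have hgy : g (y' : V) = 0 := by simpa using hy'
    rcases lt_or_gt_of_ne (mul_ne_zero hWx hWy) with h | h
    · exact ⟨y', y'.2, hgy, W, hW, h⟩
    · exact ⟨-y', L.neg_mem y'.2, by simp [hgy], W, hW, by simpa using h⟩
  obtain ⟨y, hyL, hgy, W1, hW1, hneg⟩ := hex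
  set T := H.filter (fun W => φ W x * φ W y < 0) with hT
  obtain ⟨W0, hW0, hmin⟩ := T.exists_min_image (fun W => -φ W x / φ W y)
    ⟨W1, Finset.mem_filter.2 ⟨hW1, hneg⟩⟩
  set t := -φ W0 x / φ W0 y with ht
  have hW0' := (Finset.mem_filter.1 hW0)
  have hy00 : φ W0 y ≠ 0 := fun h => by simp [h] at hW0'
  have hx00 : φ W0 x ≠ 0 := fun h => by simp [h] at hW0'
  have htpos : 0 < t := by
    have : t = -(φ W0 x * φ W0 y) / (φ W0 y * φ W0 y) := by rw [ht]; field_simp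
    rw [this]
    exact div_pos (by linarith [hW0'.2]) (mul_self_pos.2 hy00)
  have hz : ∀ W ∈ H, φ W x = 0 → φ W (x + t • y) = 0 := by
    intro W hW h
    have := (hmemL y).1 hyL W (Finset.mem_filter.2 ⟨hW, h⟩)
    simp [h, this]
  have hnn : ∀ W ∈ H, 0 ≤ φ W x * φ W (x + t • y) := by
    intro W hW
    have e : φ W x * φ W (x + t • y) = φ W x * φ W x + t * (φ W x * φ W y) := by
      simp; ring
    rw [e]
    by_cases h : φ W x * φ W y < 0
    · have h2 := hmin W (Finset.mem_filter.2 ⟨hW, h⟩)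
      have hy1 : φ W y ≠ 0 := fun h' => by simp [h'] at h
      have h3 : φ W x * φ W x = -((-φ W x / φ W y) * (φ W x * φ W y)) := by field_simp
      rw [h3]
      change t ≤ _ at h2
      nlinarith
    · push Not at h
      have := mul_self_nonneg (φ W x)
      have := mul_nonneg htpos.le h
      linarith
  have h0 : φ W0 (x + t • y) = 0 := by
    simp [ht]; field_simp; ring
  refine ih _ ?_ (x + t • y) rfl ?_ ?_
  · rw [← hk]
    apply Finset.card_lt_card
    refine Finset.ssubset_iff_subset_ne.2 ⟨?_, ?_⟩
    · intro W hW
      obtain ⟨hWH, hW⟩ := Finset.mem_filter.1 hW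
      exact Finset.mem_filter.2 ⟨hWH, fun h => hW (hz W hWH h)⟩
    · intro h
      have : W0 ∈ H.filter (fun W => φ W x ≠ 0) := Finset.mem_filter.2 ⟨hW0'.1, hx00⟩
      rw [← h] at this
      exact (Finset.mem_filter.1 this).2 h0
  · intro W hW
    obtain ⟨c1, c2⟩ := hx W hW
    refine ⟨?_, fun h => hz W hW (c2 h)⟩
    by_cases h : φ W x = 0
    · rw [hz W hW h]; simp
    · have := hnn W hW
      have h4 := mul_nonneg c1 this
      have h5 : 0 < φ W x * φ W x := mul_self_pos.2 h
      by_contra hh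
      push Not at hh
      nlinarith
  · simp [hgy, hg]

lemma sameFace_of_clF (H : Finset (Submodule ℝ V)) (φ : Submodule ℝ V → V →ₗ[ℝ] ℝ)
    (hφ : ∀ W ∈ H, LinearMap.ker (φ W) = W) {x0 z : V} (hz : ClF H φ x0 z) {s : ℝ} (hs : 0 < s) :
    SameFace H x0 (z + s • x0) := by
  intro W hW f hf
  have hmem : f ∈ Submodule.span ℝ (Set.range (fun _ : Unit => φ W)) := by
    apply mem_span_of_iInf_ker_le_ker
    simp [hφ W hW, hf]
  rw [Set.range_const, Submodule.mem_span_singleton] at hmem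
  obtain ⟨c, rfl⟩ := hmem
  obtain ⟨h1, h2⟩ := hz W hW
  by_cases h : (c • φ W) x0 = 0
  · right
    refine ⟨h, ?_⟩
    rw [map_add, map_smul, h]
    rcases (show c = 0 ∨ φ W x0 = 0 by simpa using h) with h | h
    · simp [h]
    · simp [h2 h]
  · left
    have h3 := mul_pos hs (mul_self_pos.2 h)
    have h4 := mul_nonneg (mul_self_nonneg c) h1
    simp at h3 ⊢
    nlinarith

lemma clF_of_sameFace (H : Finset (Submodule ℝ V)) (φ : Submodule ℝ V → V →ₗ[ℝ] ℝ)
    (hφ : ∀ W ∈ H, LinearMap.ker (φ W) = W) {x0 z : V} (hz : SameFace H x0 z) :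
    ClF H φ x0 z := by
  intro W hW
  rcases hz W hW _ (hφ W hW) with h | h
  · exact ⟨h.le, fun h' => by simp [h'] at h⟩
  · simp [h.1, h.2]

end Geo
section Link
open scoped Classical
variable {V : Type*} [NormedAddCommGroup V] [NormedSpace ℝ V] [FiniteDimensional ℝ V]

lemma exists_rays (H : Finset (Submodule ℝ V)) :
    ∃ (m : ℕ) (v : Fin m → V), (∀ i, v i ≠ 0) ∧
      (∀ i, ∃ l, IsFlat H l ∧ Module.finrank ℝ l = 1 ∧ v i ∈ l) ∧
      (∀ l : Submodule ℝ V, IsFlat H l → Module.finrank ℝ l = 1 → ∀ x ∈ l, x ≠ 0 →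
        ∃ i, ∃ c : ℝ, 0 < c ∧ x = c • v i) := by
  set Fl : Finset (Submodule ℝ V) :=
    (H.powerset.image (fun J => J.inf id)).filter (fun l => Module.finrank ℝ l = 1) with hFl
  have hmem : ∀ l, l ∈ Fl ↔ IsFlat H l ∧ Module.finrank ℝ l = 1 := by
    intro l
    simp only [hFl, Finset.mem_filter, Finset.mem_image, Finset.mem_powerset, IsFlat]
    refine and_congr_left fun _ => exists_congr fun J => ?_
    exact and_congr_right fun _ => eq_comm
  have hg : ∀ l : Submodule ℝ V, ∃ g : V, Module.finrank ℝ l = 1 →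
      g ∈ l ∧ g ≠ 0 ∧ ∀ x ∈ l, ∃ c : ℝ, x = c • g := by
    intro l
    by_cases h : Module.finrank ℝ l = 1
    · obtain ⟨g, hg0, hg⟩ := finrank_eq_one_iff'.1 h
      refine ⟨g, fun _ => ⟨g.2, by simpa using hg0, fun x hx => ?_⟩⟩
      obtain ⟨c, hc⟩ := hg ⟨x, hx⟩
      exact ⟨c, by simpa using (congrArg Subtype.val hc).symm⟩
    · exact ⟨0, fun h' => absurd h' h⟩
  choose g hg using hg
  set R : Finset V := Fl.image g ∪ Fl.image (fun l => - g l) with hR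
  have hmR : ∀ x, x ∈ R ↔ ∃ l ∈ Fl, x = g l ∨ x = - g l := by
    intro x
    simp only [hR, Finset.mem_union, Finset.mem_image]
    constructor
    · rintro (⟨l, h, rfl⟩ | ⟨l, h, rfl⟩)
      · exact ⟨l, h, Or.inl rfl⟩
      · exact ⟨l, h, Or.inr rfl⟩
    · rintro ⟨l, h, rfl | rfl⟩
      · exact Or.inl ⟨l, h, rfl⟩
      · exact Or.inr ⟨l, h, rfl⟩
  refine ⟨R.card, fun i => (R.equivFin.symm i : V), ?_, ?_, ?_⟩
  · intro i
    obtain ⟨l, hl, h⟩ := (hmR _).1 (R.equivFin.symm i).2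
    have := (hg l ((hmem l).1 hl).2).2.1
    rcases h with h | h <;> simp [h, this]
  · intro i
    obtain ⟨l, hl, h⟩ := (hmR _).1 (R.equivFin.symm i).2
    have := (hg l ((hmem l).1 hl).2).1
    refine ⟨l, ((hmem l).1 hl).1, ((hmem l).1 hl).2, ?_⟩
    rcases h with h | h <;> simp [h, this]
  · intro l hl1 hl2 x hx hx0
    obtain ⟨-, -, h3⟩ := hg l hl2
    obtain ⟨c, rfl⟩ := h3 x hx
    have hc : c ≠ 0 := fun h => by simp [h] at hx0
    rcases lt_or_gt_of_ne hc with h | h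
    · refine ⟨R.equivFin ⟨- g l, (hmR _).2 ⟨l, (hmem l).2 ⟨hl1, hl2⟩, Or.inr rfl⟩⟩, -c, by linarith, ?_⟩
      simp
    · refine ⟨R.equivFin ⟨g l, (hmR _).2 ⟨l, (hmem l).2 ⟨hl1, hl2⟩, Or.inl rfl⟩⟩, c, h, ?_⟩
      simp

lemma sign_eq_iff_mul (a b : ℝ) :
    SignType.sign a = SignType.sign b ↔ (0 < a * b ∨ (a = 0 ∧ b = 0)) := by
  rw [← sign_eq_one_iff, sign_mul, ← sign_eq_zero_iff, ← sign_eq_zero_iff (a := b)]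
  generalize SignType.sign a = s
  generalize SignType.sign b = t
  revert s t
  decide

lemma dsf_iff {H : Finset (Submodule ℝ V)} {m : ℕ} {v : Fin m → V}
    (hv1 : ∀ i, ∃ l, IsFlat H l ∧ Module.finrank ℝ l = 1 ∧ v i ∈ l)
    (hv2 : ∀ l : Submodule ℝ V, IsFlat H l → Module.finrank ℝ l = 1 → ∀ x ∈ l, x ≠ 0 →
        ∃ i, ∃ c : ℝ, 0 < c ∧ x = c • v i) (f g : V →L[ℝ] ℝ) :
    DualSameFace H f g ↔ ∀ i, SignType.sign (g (v i)) = SignType.sign (f (v i)) := by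
  constructor
  · intro h i
    obtain ⟨l, h1, h2, h3⟩ := hv1 i
    exact ((sign_eq_iff_mul _ _).2 (h l h1 h2 _ h3)).symm
  · intro h l h1 h2 x hx
    by_cases hx0 : x = 0
    · right; simp [hx0]
    · obtain ⟨i, c, hc, rfl⟩ := hv2 l h1 h2 x hx hx0
      rw [← sign_eq_iff_mul]
      simp [sign_mul, h i]

lemma closure_sgFace {m : ℕ} (v : Fin m → V) (a f : V →L[ℝ] ℝ) (σ : Fin m → SignType)
    (hf : f ∈ sgFace v σ) :
    {g : V →L[ℝ] ℝ | ∀ i, SignType.sign (g (v i)) = SignType.sign (a (v i))} ⊆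
      closure (sgFace v σ) ↔ f ∈ star' v a := by
  constructor
  · intro h i hi
    have ha : a ∈ closure (sgFace v σ) := h (fun i => rfl)
    have ho : IsOpen {g : V →L[ℝ] ℝ | 0 < a (v i) * g (v i)} :=
      isOpen_lt continuous_const (continuous_const.mul (evalAt (v i)).continuous)
    obtain ⟨g, hg1, hg2⟩ := mem_closure_iff.1 ha _ ho hi
    have e : SignType.sign (g (v i)) = SignType.sign (f (v i)) := (hg2 i).trans (hf i).symm
    change 0 < a (v i) * g (v i) at hg1
    rw [← sign_eq_one_iff, sign_mul] at hg1 ⊢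
    rw [← e]; exact hg1
  · intro h b hb
    rw [mem_star'_iff] at h
    have hmem : ∀ t : ℝ, 0 < t → b + t • f ∈ sgFace v σ := by
      intro t ht i
      rw [← hf i]
      have hb' : SignType.sign (b (v i)) = SignType.sign (a (v i)) := hb i
      have hfe : (b + t • f) (v i) = b (v i) + t * f (v i) := by simp
      rw [hfe]
      by_cases h0 : a (v i) = 0
      · rw [h0, sign_zero, sign_eq_zero_iff] at hb'
        rw [hb', zero_add, sign_mul, sign_pos ht, one_mul]
      · have h1 := h i h0
        rcases lt_or_gt_of_ne h0 with h2 | h2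
        · rw [sign_neg h2, sign_eq_neg_one_iff] at h1 hb'
          rw [sign_neg h1, sign_neg]; nlinarith
        · rw [sign_pos h2, sign_eq_one_iff] at h1 hb'
          rw [sign_pos h1, sign_pos]; positivity
    rw [mem_closure_iff]
    intro o ho hbo
    obtain ⟨t, ht, h3⟩ := exists_small ho hbo f
    exact ⟨_, h3, hmem t ht⟩

lemma sgFace_open {m : ℕ} (v : Fin m → V) (f : V →L[ℝ] ℝ) (hf : ∀ i, f (v i) ≠ 0) :
    IsOpen (sgFace v fun i => SignType.sign (f (v i))) := by
  have : (sgFace v fun i => SignType.sign (f (v i))) = star' v f := by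
    ext g
    rw [mem_star'_iff]
    exact forall_congr' fun i => ⟨fun h _ => h, fun h => h (hf i)⟩
  rw [this]; exact star'_open v f

lemma exists_generic {m : ℕ} (v : Fin m → V) (hv : ∀ i, v i ≠ 0) {P : Set (V →L[ℝ] ℝ)}
    (hP : IsOpen P) (f : V →L[ℝ] ℝ) (hf : f ∈ P) : ∃ g ∈ P, ∀ i, g (v i) ≠ 0 := by
  obtain ⟨d, hd⟩ := Module.exists_dual_forall_apply_ne_zero (K := ℝ) v hv
  set d' : V →L[ℝ] ℝ := LinearMap.toContinuousLinearMap d with hd'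
  have hd'e : ∀ x, d' x = d x := fun x => rfl
  have ho : IsOpen (P ∩ star' v f) := hP.inter (star'_open v f)
  obtain ⟨t, ht, h⟩ := exists_small ho ⟨hf, self_mem_star' v f⟩ d'
  refine ⟨_, h.1, fun i hi => ?_⟩
  by_cases h0 : f (v i) = 0
  · apply hd i
    have : t * d (v i) = 0 := by simpa [h0, hd'e] using hi
    exact (mul_eq_zero.1 this).resolve_left ht.ne'
  · have := h.2 i (mul_self_pos.2 h0)
    rw [hi] at this
    simp at this

end Link
/-- weighted face count over a dual face: for a dual face `A∨` and
a face `B` of `H`, the sum `Σ (−1)^{n − dim B∨}` over dual faces `B∨ ≥ A∨` with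
`B ⊆ U(B∨)` equals `1` if `B ⊆ V(A∨)` and `0` otherwise. -/
theorem statement14 {V : Type*} [NormedAddCommGroup V] [NormedSpace ℝ V]
    [FiniteDimensional ℝ V] (H : Finset (Submodule ℝ V))
    (hHyp : ∀ W ∈ H, ∃ f : V →ₗ[ℝ] ℝ, f ≠ 0 ∧ LinearMap.ker f = W)
    (hEss : (⋂ W ∈ H, (W : Set V)) = {0})
    (A : Set (V →L[ℝ] ℝ)) (hA : IsDualFace H A)
    (B : Set V) (hB : IsFace H B)
    (F : Finset (Set (V →L[ℝ] ℝ)))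
    (hF : ∀ C : Set (V →L[ℝ] ℝ),
      C ∈ F ↔ IsDualFace H C ∧ A ⊆ closure C ∧ B ⊆ bigCone C) :
    (B ⊆ smallCone H A →
      ∑ C ∈ F,
        (-1 : ℤ) ^ (Module.finrank ℝ V - Module.finrank ℝ (Submodule.span ℝ C)) = 1) ∧
    (¬ B ⊆ smallCone H A →
      ∑ C ∈ F,
        (-1 : ℤ) ^ (Module.finrank ℝ V - Module.finrank ℝ (Submodule.span ℝ C)) = 0) := by
  classical
  choose! φ hφ0 hφ using hHyp
  have hess : ∀ y, (∀ W ∈ H, φ W y = 0) → y = 0 := by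
    intro y hy
    have : y ∈ (⋂ W ∈ H, (W : Set V)) := by
      simp only [Set.mem_iInter, SetLike.mem_coe]
      intro W hW
      rw [← hφ W hW]; exact hy W hW
    rw [hEss] at this; exact this
  obtain ⟨m, v, hv0, hv1, hv2⟩ := exists_rays H
  obtain ⟨a, rfl⟩ := hA
  obtain ⟨x0, rfl⟩ := hB
  set J : Finset (Fin m) := Finset.univ.filter (fun j => ClF H φ x0 (v j)) with hJ
  have hnn : ∀ f : V →L[ℝ] ℝ,
      (∀ x ∈ {y | SameFace H x0 y}, 0 ≤ f x) ↔ ∀ j ∈ J, 0 ≤ f (v j) := by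
    intro f
    constructor
    · intro h j hj
      have hcl := (Finset.mem_filter.1 hj).2
      by_contra hneg
      push Not at hneg
      obtain ⟨s, hs, h1⟩ := exists_small
        (isOpen_lt f.continuous continuous_const : IsOpen {x | f x < 0}) hneg x0
      have := h _ (sameFace_of_clF H φ hφ hcl hs)
      exact absurd h1 (not_lt.2 this)
    · intro h x hx
      by_contra hneg
      push Not at hneg
      obtain ⟨r, hr, hgr, l, hl1, hl2, hrl⟩ := gen_aux H φ hφ hess x0 (f : V →ₗ[ℝ] ℝ) _ x rfl
        (clF_of_sameFace H φ hφ hx) hneg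
      have hr0 : r ≠ 0 := fun h => by simp [h] at hgr
      obtain ⟨i, c, hc, rfl⟩ := hv2 l hl1 hl2 r hrl hr0
      have hi : i ∈ J := by
        refine Finset.mem_filter.2 ⟨Finset.mem_univ _, fun W hW => ?_⟩
        obtain ⟨h1, h2⟩ := hr W hW
        simp only [map_smul, smul_eq_mul] at h1 h2
        constructor
        · by_contra hh; push Not at hh; nlinarith
        · intro h3; exact (mul_eq_zero.1 (h2 h3)).resolve_left hc.ne'
      have h4 := mul_nonneg hc.le (h i hi)
      simp at hgr
      linarith
  -- interior functional
  set e : V →L[ℝ] ℝ := LinearMap.toContinuousLinearMap (∑ W ∈ H, φ W x0 • φ W) with he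
  have hee : ∀ x, e x = ∑ W ∈ H, φ W x0 * φ W x := by
    intro x; simp [he]
  have hepos : ∀ j ∈ J, 0 < e (v j) := by
    intro j hj
    have hcl := (Finset.mem_filter.1 hj).2
    rw [hee]
    refine lt_of_le_of_ne (Finset.sum_nonneg fun W hW => (hcl W hW).1) fun h => hv0 j (hess _ ?_)
    intro W hW
    have := (Finset.sum_eq_zero_iff_of_nonneg fun W hW => (hcl W hW).1).1 h.symm W hW
    rcases mul_eq_zero.1 this with h | h
    · exact (hcl W hW).2 h
    · exact h
  have hface : ∀ f, {g | DualSameFace H f g} = sgFace v (fun i => SignType.sign (f (v i))) := by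
    intro f; ext g; exact dsf_iff hv1 hv2 f g
  have hself : ∀ f : V →L[ℝ] ℝ, f ∈ sgFace v (fun i => SignType.sign (f (v i))) :=
    fun f i => rfl
  have hcl : ∀ f σ, f ∈ sgFace v σ →
      ({g | DualSameFace H a g} ⊆ closure (sgFace v σ) ↔ f ∈ star' v a) := by
    intro f σ hf
    rw [hface]; exact closure_sgFace v a f σ hf
  -- small cone
  have hsmall : {y | SameFace H x0 y} ⊆ smallCone H {g | DualSameFace H a g} ↔
      ∀ j ∈ J, 0 < a (v j) := by
    constructor
    · intro h j hj
      by_contra hneg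
      push Not at hneg
      obtain ⟨t, ht, h1⟩ := exists_small (star'_open v a) (self_mem_star' v a) (-e)
      have h2 : (a + t • (-e)) (v j) < 0 := by
        have := mul_pos ht (hepos j hj)
        simp; linarith
      obtain ⟨f, ⟨hf1, hf2⟩, hf3⟩ := exists_generic v hv0
        ((star'_open v a).inter (negOpen v {j})) _ ⟨h1, by simpa using h2⟩
      have hch : IsDualChamber H (sgFace v (fun i => SignType.sign (f (v i)))) :=
        ⟨⟨f, (hface f).symm⟩, sgFace_open v f hf3⟩
      have h5 := (hnn f).1 (fun x hx => by
        have := h hx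
        simp only [smallCone, Set.mem_iInter, Set.mem_setOf_eq] at this
        exact this _ ⟨hch, (hcl f _ (hself f)).2 hf1⟩ f (hself f)) j hj
      have h6 := hf2 j (by simp)
      linarith
    · intro h x hx
      simp only [smallCone, Set.mem_iInter, Set.mem_setOf_eq]
      rintro C ⟨⟨⟨f0, rfl⟩, -⟩, hC⟩ f hf
      rw [hface f0] at hC hf
      have h1 := (mem_star'_iff v a f).1 ((hcl f _ hf).1 hC)
      refine (hnn f).2 (fun j hj => ?_) x hx
      have h2 := h1 j (h j hj).ne'
      rw [sign_pos (h j hj), sign_eq_one_iff] at h2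
      exact h2.le
  -- the sum
  have hsum : ∑ C ∈ F,
        (-1 : ℤ) ^ (Module.finrank ℝ V - Module.finrank ℝ (Submodule.span ℝ C)) =
      if ∀ j ∈ J, 0 < a (v j) then 1 else 0 := by
    by_cases ha : ∀ j ∈ J, 0 ≤ a (v j)
    swap
    · push Not at ha
      obtain ⟨j, hj, hja⟩ := ha
      rw [if_neg (fun h => absurd (h j hj) (not_lt.2 hja.le))]
      apply Finset.sum_eq_zero
      intro C hC
      exfalso
      obtain ⟨⟨f, rfl⟩, h1, h2⟩ := (hF C).1 hC
      rw [hface f] at h1 h2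
      have h3 := (mem_star'_iff v a f).1 ((hcl f _ (hself f)).1 h1) j hja.ne
      have h4 := (hnn f).1 (fun x hx => h2 hx f (hself f)) j hj
      rw [sign_neg hja, sign_eq_neg_one_iff] at h3
      linarith
    have hcs := comb_sum v J a e ha hepos
    set good : (Fin m → SignType) → Prop := fun σ =>
      (∀ i, a (v i) ≠ 0 → σ i = SignType.sign (a (v i))) ∧ ∀ j ∈ J, σ j ≠ -1 with hgood
    have hgF : ∀ σ f, f ∈ sgFace v σ → (sgFace v σ ∈ F ↔ good σ) := by
      intro σ f hf
      have hσ : σ = fun i => SignType.sign (f (v i)) := funext fun i => (hf i).symm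
      have hb : {y | SameFace H x0 y} ⊆ bigCone (sgFace v σ) ↔ ∀ j ∈ J, σ j ≠ -1 := by
        constructor
        · intro h j hj hs
          have h4 := (hnn f).1 (fun x hx => h hx f hf) j hj
          rw [← hf j, sign_eq_neg_one_iff] at hs
          linarith
        · intro h x hx g hg
          refine (hnn g).2 (fun j hj => ?_) x hx
          by_contra hneg
          push Not at hneg
          apply h j hj
          rw [← hg j, sign_neg hneg]
      rw [hF, hcl f σ hf, hb, mem_star'_iff]
      constructor
      · rintro ⟨-, h1, h2⟩
        exact ⟨fun i hi => by rw [← hf i]; exact h1 i hi, h2⟩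
      · rintro ⟨h1, h2⟩
        exact ⟨⟨f, by rw [hface, hσ]⟩, fun i hi => by rw [hf i]; exact h1 i hi, h2⟩
    set T : Finset (Fin m → SignType) :=
      Finset.univ.filter (fun σ => good σ ∧ (sgFace v σ).Nonempty) with hT
    have hFT : F = T.image (sgFace v) := by
      ext C
      rw [Finset.mem_image]
      constructor
      · intro hC
        obtain ⟨⟨f, hf⟩, -⟩ := (hF C).1 hC
        rw [hface] at hf
        rw [hf] at hC
        exact ⟨_, Finset.mem_filter.2 ⟨Finset.mem_univ _, (hgF _ f (hself f)).1 hC, f, hself f⟩,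
          hf.symm⟩
      · rintro ⟨σ, hσ, rfl⟩
        obtain ⟨-, h1, f, hf⟩ := Finset.mem_filter.1 hσ
        exact (hgF σ f hf).2 h1
    have hinj : Set.InjOn (sgFace v) (T : Set (Fin m → SignType)) := by
      intro σ hσ τ hτ h
      obtain ⟨-, -, f, hf⟩ := Finset.mem_filter.1 (Finset.mem_coe.1 hσ)
      have hf' := hf
      rw [h] at hf'
      funext i
      rw [← hf i, ← hf' i]
    have hsq : ((-1 : ℤ) ^ Module.finrank ℝ V) * (-1 : ℤ) ^ Module.finrank ℝ V = 1 := by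
      rw [← mul_pow]; simp
    have hterm : ∀ σ ∈ T, (-1 : ℤ) ^ (Module.finrank ℝ V -
        Module.finrank ℝ (Submodule.span ℝ (sgFace v σ))) =
        (-1) ^ Module.finrank ℝ V * eul (sgFace v σ) := by
      intro σ hσ
      have hne := (Finset.mem_filter.1 hσ).2.2
      rw [eul, if_pos hne]
      have hle : Module.finrank ℝ (Submodule.span ℝ (sgFace v σ)) ≤ Module.finrank ℝ V := by
        rw [← finrank_cdual (V := V)]; exact Submodule.finrank_le _
      obtain ⟨k, hk⟩ := Nat.exists_eq_add_of_le hle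
      rw [hk, Nat.add_sub_cancel_left, pow_add, mul_right_comm, ← mul_pow]
      simp
    rw [hFT, Finset.sum_image hinj, Finset.sum_congr rfl hterm, ← Finset.mul_sum]
    have hT2 : ∑ σ ∈ T, eul (sgFace v σ) = ∑ σ, if good σ then eul (sgFace v σ) else 0 := by
      rw [hT, Finset.sum_filter]
      refine Finset.sum_congr rfl fun σ _ => ?_
      by_cases h1 : good σ <;> by_cases h2 : (sgFace v σ).Nonempty <;> simp [h1, h2, eul]
    have hcs' : (∑ σ, if good σ then eul (sgFace v σ) else 0) = (-1) ^ Module.finrank ℝ V *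
        (if ∀ j ∈ J, 0 < a (v j) then 1 else 0) := by
      rw [← hcs]
    rw [hT2, hcs', ← mul_assoc, hsq, one_mul]
  rw [hsum, hsmall]
  exact ⟨fun h => if_pos h, fun h => if_neg h⟩
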